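/- Let p be a prime, let q1 and q2 be powers of p, let n ≥ 2, let a be the smallest prime divisor of n, let R = A(n,q1,q2), and let q = q1 ⊗ q2 = q1^d. If d ≥ n − (n/a), then R is not σ-elementary and σ(R) = σ(M_n(q1)), where M_n(q1) is the ring of n×n matrices over F_{q1}. In particular, R is never σ-elementary when n = 2. -/

import Mathlib

/-!
# Affine matrix rings that are not `σ`-elementary

Write `R = AGL n F1 F2`, `S = Matₙ(F1)`, `Q = |F1|`, `|F| = Q ^ d`, and let `a` be the smallest prime
divisor of `n`. Since `S` is a quotient of `R`, covers of `S` pull back and `σ(R) ≤ σ(S)`; the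
reverse inequality also shows that `R` is not `σ`-elementary.

*Lower bound* (`min_le_coveringNumber`): `σ(R) ≥ min (|F|ⁿ) (σ(S))`. The ideal `J` of top-right
columns is minimal because `F1` and `F2` generate `F`. It has the `|F|ⁿ` complements `levi F1 F2 x`,
and a proper subring contains at most one of them (`eq_top_of_levi_le`). So a cover either has at
least `|F|ⁿ` members, or some complement, isomorphic to `S × F2`, is contained in none of them. In
the second case fix a generator `u` of the ring `F2` and look only at the elements `(A, u)` of that
complement: the members of the cover meeting this set have proper projections to `S`
(`levi_le_of_surjects`), and these projections cover `S`.

*Upper bound* (`coveringNumber_matrix_le`, `coveringNumber_matrix_two_le`):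
`σ(S) ≤ Q ^ (n (n - n / a))`, which is at most `Q ^ (n d) = |F|ⁿ` by the hypothesis on `d`. A matrix
`A` either preserves a nonzero subspace of dimension at most `n - n / a`, or generates a field of
degree `n` over `F1` and hence commutes with a copy of the extension `L` of degree `a`
(`stabilizes_or_commutes`). Stabilizers of subspaces and centralizers of copies of `L` therefore
cover `S`. Comparing `|GLₙ(F1)|` with `|GL_{n/a}(L)|` bounds the number of embeddings of `L`, and
counting spanning tuples bounds the number of subspaces. For `n ≥ 3` the sum of these bounds is at
most the required power of `Q`. The case `n = 2` leaves no room for such estimates and uses an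
explicit cover indexed by `F1 × F1`.
-/

open scoped Classical

noncomputable section

/-- A (finite) cover of a not-necessarily-unital ring: a finite collection of proper
subrings whose set-theoretic union is all of `R`. -/
def IsRingCover (R : Type*) [NonUnitalRing R] (C : Finset (NonUnitalSubring R)) : Prop :=
  (∀ S ∈ C, S ≠ (⊤ : NonUnitalSubring R)) ∧ ∀ r : R, ∃ S ∈ C, r ∈ S

/-- The covering number `σ(R)`: the least cardinality of a cover of `R`,
or `⊤` if no cover exists. -/
noncomputable def coveringNumber (R : Type*) [NonUnitalRing R] : ℕ∞ :=
  sInf {c : ℕ∞ | ∃ C : Finset (NonUnitalSubring R), IsRingCover R C ∧ (C.card : ℕ∞) = c}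

/-- `R` is σ-elementary if `σ(R) < σ(R/I)` for every nonzero two-sided ideal `I`. -/
def IsSigmaElementary (R : Type*) [NonUnitalRing R] : Prop :=
  ∀ I : TwoSidedIdeal R, I ≠ ⊥ → coveringNumber R < coveringNumber I.ringCon.Quotient

/-- The AGL-type ring `A(n, F1, F2)` as a subring of `(n+1) × (n+1)` matrices over `F`:
top-left `n × n` block with entries in `F1`, arbitrary top-right column, zero bottom-left
row, bottom-right entry in `F2`. -/
def AGL (n : ℕ) {F : Type*} [Field F] (F1 F2 : Subfield F) :
    Subring (Matrix (Fin (n + 1)) (Fin (n + 1)) F) where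
  carrier := {M | (∀ i j : Fin n, M i.castSucc j.castSucc ∈ F1) ∧
      (∀ j : Fin n, M (Fin.last n) j.castSucc = 0) ∧
      M (Fin.last n) (Fin.last n) ∈ F2}
  zero_mem' := by
    refine ⟨fun i j => ?_, fun j => rfl, ?_⟩
    · exact zero_mem F1
    · exact zero_mem F2
  one_mem' := by
    refine ⟨fun i j => ?_, fun j => ?_, ?_⟩
    · rw [Matrix.one_apply]
      split
      · exact one_mem F1
      · exact zero_mem F1
    · exact Matrix.one_apply_ne (Fin.castSucc_lt_last j).ne'
    · rw [Matrix.one_apply_eq]; exact one_mem F2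
  add_mem' := by
    rintro a b ⟨ha1, ha2, ha3⟩ ⟨hb1, hb2, hb3⟩
    refine ⟨fun i j => add_mem (ha1 i j) (hb1 i j), fun j => ?_, add_mem ha3 hb3⟩
    rw [Matrix.add_apply, ha2 j, hb2 j, add_zero]
  neg_mem' := by
    rintro a ⟨ha1, ha2, ha3⟩
    refine ⟨fun i j => neg_mem (ha1 i j), fun j => ?_, neg_mem ha3⟩
    rw [Matrix.neg_apply, ha2 j, neg_zero]
  mul_mem' := by
    rintro a b ⟨ha1, ha2, ha3⟩ ⟨hb1, hb2, hb3⟩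
    refine ⟨fun i j => ?_, fun j => ?_, ?_⟩
    · rw [Matrix.mul_apply, Fin.sum_univ_castSucc, hb2 j, mul_zero, add_zero]
      exact sum_mem fun k _ => mul_mem (ha1 i k) (hb1 k j)
    · rw [Matrix.mul_apply, Fin.sum_univ_castSucc, hb2 j, mul_zero, add_zero]
      exact Finset.sum_eq_zero fun k _ => by rw [ha2 k, zero_mul]
    · rw [Matrix.mul_apply, Fin.sum_univ_castSucc]
      have h0 : ∑ k : Fin n, a (Fin.last n) k.castSucc * b k.castSucc (Fin.last n) = 0 :=
        Finset.sum_eq_zero fun k _ => by rw [ha2 k, zero_mul]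
      rw [h0, zero_add]
      exact mul_mem ha3 hb3

/-- The Gaussian (q-)binomial coefficient, via the Pascal-type recurrence. -/
def gaussBinom (q : ℕ) : ℕ → ℕ → ℕ
  | _, 0 => 1
  | 0, _ + 1 => 0
  | n + 1, k + 1 => gaussBinom q n k + q ^ (k + 1) * gaussBinom q n (k + 1)

/-- The order of `GL(N, Q)` for a prime power `Q`. -/
def GLcard (N Q : ℕ) : ℕ := ∏ k ∈ Finset.range N, (Q ^ N - Q ^ k)



namespace AGLCover

/-! ### Covering numbers -/

theorem coveringNumber_le_card {R : Type*} [NonUnitalRing R] {C : Finset (NonUnitalSubring R)}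
    (hC : IsRingCover R C) : coveringNumber R ≤ C.card :=
  sInf_le ⟨C, hC, rfl⟩

theorem le_coveringNumber {R : Type*} [NonUnitalRing R] {c : ℕ∞}
    (h : ∀ C : Finset (NonUnitalSubring R), IsRingCover R C → c ≤ C.card) :
    c ≤ coveringNumber R := by
  refine le_sInf ?_
  rintro _ ⟨C, hC, rfl⟩
  exact h C hC

theorem coveringNumber_le_of_family {R : Type*} [NonUnitalRing R] {ι : Type*} [Finite ι]
    (S : ι → NonUnitalSubring R) (hS : ∀ i, S i ≠ ⊤) (hcov : ∀ r, ∃ i, r ∈ S i) :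
    coveringNumber R ≤ Nat.card ι := by
  have := Fintype.ofFinite ι
  refine (coveringNumber_le_card (C := Finset.univ.image S) ⟨?_, ?_⟩).trans ?_
  · intro T hT
    obtain ⟨i, -, rfl⟩ := Finset.mem_image.1 hT
    exact hS i
  · intro r
    obtain ⟨i, hi⟩ := hcov r
    exact ⟨S i, Finset.mem_image_of_mem _ (Finset.mem_univ _), hi⟩
  · rw [Nat.card_eq_fintype_card]
    exact_mod_cast Finset.card_image_le

/-- Covers pull back along surjections, so a ring is at most as hard to cover as its quotients. -/
theorem coveringNumber_le_of_surjective {R R' : Type*} [NonUnitalRing R] [NonUnitalRing R']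
    (f : R →ₙ+* R') (hf : Function.Surjective f) : coveringNumber R ≤ coveringNumber R' := by
  refine le_coveringNumber fun C hC => ?_
  refine (coveringNumber_le_card (C := C.image (NonUnitalSubring.comap f)) ⟨?_, ?_⟩).trans ?_
  · intro T hT
    obtain ⟨S, hS, rfl⟩ := Finset.mem_image.1 hT
    intro h
    refine hC.1 S hS (eq_top_iff.2 fun y _ => ?_)
    obtain ⟨x, rfl⟩ := hf y
    have : x ∈ NonUnitalSubring.comap f S := h ▸ NonUnitalSubring.mem_top x
    exact this
  · intro r
    obtain ⟨S, hS, hr⟩ := hC.2 (f r)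
    exact ⟨_, Finset.mem_image_of_mem _ hS, hr⟩
  · exact_mod_cast Finset.card_image_le

/-! ### Coordinates on the ring of affine type -/

section AGLcoords

variable {n : ℕ} {F : Type} [Field F] {F1 F2 : Subfield F}

/-- The action of a matrix over the subfield `F1` on a column over `F`. -/
def act (A : Matrix (Fin n) (Fin n) F1) (y : Fin n → F) : Fin n → F :=
  fun i => ∑ j, (A i j : F) * y j

/-- The element of `AGL n F1 F2` with top-left block `A`, top-right column `y` and
bottom-right entry `b`. -/
def mk (A : Matrix (Fin n) (Fin n) F1) (y : Fin n → F) (b : F2) : AGL n F1 F2 :=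
  ⟨Matrix.of fun i j => Fin.lastCases (motive := fun _ => F)
      (Fin.lastCases (motive := fun _ => F) (b : F) (fun _ => 0) j)
      (fun i' => Fin.lastCases (motive := fun _ => F) (y i') (fun j' => (A i' j' : F)) j) i, by
    refine ⟨fun i j => ?_, fun j => ?_, ?_⟩ <;> simp⟩

/-- Projection to the top-left block. -/
def topLeft (M : AGL n F1 F2) : Matrix (Fin n) (Fin n) F1 :=
  Matrix.of fun i j => ⟨M.1 i.castSucc j.castSucc, M.2.1 i j⟩

theorem exists_mk (M : AGL n F1 F2) : ∃ A y b, M = mk A y b := by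
  refine ⟨topLeft M, fun i => M.1 i.castSucc (Fin.last n), ⟨_, M.2.2.2⟩, ?_⟩
  ext i j
  refine Fin.lastCases ?_ (fun i => ?_) i <;> refine Fin.lastCases ?_ (fun j => ?_) j <;>
    simp [mk, topLeft, M.2.2.1]

theorem mk_inj {A A' : Matrix (Fin n) (Fin n) F1} {y y' : Fin n → F} {b b' : F2} :
    mk A y b = mk A' y' b' ↔ A = A' ∧ y = y' ∧ b = b' := by
  constructor
  · intro h
    have h' : ∀ i j, (mk A y b).1 i j = (mk A' y' b').1 i j := fun i j => by rw [h]
    refine ⟨?_, ?_, ?_⟩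
    · ext i j
      simpa [mk] using h' i.castSucc j.castSucc
    · ext i
      simpa [mk] using h' i.castSucc (Fin.last n)
    · ext
      simpa [mk] using h' (Fin.last n) (Fin.last n)
  · rintro ⟨rfl, rfl, rfl⟩
    rfl

theorem mk_add (A A' : Matrix (Fin n) (Fin n) F1) (y y' : Fin n → F) (b b' : F2) :
    mk A y b + mk A' y' b' = mk (A + A') (y + y') (b + b') := by
  ext i j
  refine Fin.lastCases ?_ (fun i => ?_) i <;> refine Fin.lastCases ?_ (fun j => ?_) j <;>
    simp [mk]

theorem mk_neg (A : Matrix (Fin n) (Fin n) F1) (y : Fin n → F) (b : F2) :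
    -mk A y b = mk (-A) (-y) (-b) := by
  ext i j
  refine Fin.lastCases ?_ (fun i => ?_) i <;> refine Fin.lastCases ?_ (fun j => ?_) j <;>
    simp [mk]

theorem mk_sub (A A' : Matrix (Fin n) (Fin n) F1) (y y' : Fin n → F) (b b' : F2) :
    mk A y b - mk A' y' b' = mk (A - A') (y - y') (b - b') := by
  simp only [sub_eq_add_neg, mk_neg, mk_add]

theorem mk_zero : mk (0 : Matrix (Fin n) (Fin n) F1) 0 (0 : F2) = 0 := by
  ext i j
  refine Fin.lastCases ?_ (fun i => ?_) i <;> refine Fin.lastCases ?_ (fun j => ?_) j <;>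
    simp [mk]

theorem mk_mul (A A' : Matrix (Fin n) (Fin n) F1) (y y' : Fin n → F) (b b' : F2) :
    mk A y b * mk A' y' b' = mk (A * A') (act A y' + (b' : F) • y) (b * b') := by
  ext i j
  refine Fin.lastCases ?_ (fun i => ?_) i <;> refine Fin.lastCases ?_ (fun j => ?_) j <;>
    simp [mk, Matrix.mul_apply, Fin.sum_univ_castSucc, act, mul_comm]

theorem act_add_left (A A' : Matrix (Fin n) (Fin n) F1) (y : Fin n → F) :
    act (A + A') y = act A y + act A' y := by
  ext i; simp [act, add_mul, Finset.sum_add_distrib]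

theorem act_neg_left (A : Matrix (Fin n) (Fin n) F1) (y : Fin n → F) :
    act (-A) y = -act A y := by
  ext i; simp [act]

theorem act_zero_left (y : Fin n → F) : act (0 : Matrix (Fin n) (Fin n) F1) y = 0 := by
  ext i; simp [act]

theorem act_one_left (y : Fin n → F) : act (1 : Matrix (Fin n) (Fin n) F1) y = y := by
  ext i
  rw [act, Finset.sum_eq_single i] <;> simp +contextual [eq_comm]

theorem act_zero_right (A : Matrix (Fin n) (Fin n) F1) : act A 0 = 0 := by
  ext i; simp [act]

theorem act_sub_right (A : Matrix (Fin n) (Fin n) F1) (y z : Fin n → F) :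
    act A (y - z) = act A y - act A z := by
  ext i; simp [act, mul_sub]

theorem act_smul_right (A : Matrix (Fin n) (Fin n) F1) (c : F) (y : Fin n → F) :
    act A (c • y) = c • act A y := by
  ext i; simp only [act, Pi.smul_apply, smul_eq_mul, Finset.mul_sum]
  exact Finset.sum_congr rfl fun j _ => by ring

theorem act_mul (A A' : Matrix (Fin n) (Fin n) F1) (y : Fin n → F) :
    act (A * A') y = act A (act A' y) := by
  ext i
  simp only [act, Matrix.mul_apply, Finset.mul_sum]
  push_cast
  simp only [Finset.sum_mul, mul_assoc]
  exact Finset.sum_comm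

theorem topLeft_mk (A : Matrix (Fin n) (Fin n) F1) (y : Fin n → F) (b : F2) :
    topLeft (mk A y b) = A := by
  ext i j; simp [topLeft, mk]

/-- The projection of `AGL n F1 F2` onto `Matₙ(F1)`, as a ring homomorphism. -/
def topLeftHom : AGL n F1 F2 →+* Matrix (Fin n) (Fin n) F1 where
  toFun := topLeft
  map_zero' := by rw [← mk_zero, topLeft_mk]
  map_one' := by ext i j; simp [topLeft, Matrix.one_apply, apply_ite]
  map_add' M N := by
    obtain ⟨A, y, b, rfl⟩ := exists_mk M
    obtain ⟨A', y', b', rfl⟩ := exists_mk N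
    rw [mk_add, topLeft_mk, topLeft_mk, topLeft_mk]
  map_mul' M N := by
    obtain ⟨A, y, b, rfl⟩ := exists_mk M
    obtain ⟨A', y', b', rfl⟩ := exists_mk N
    rw [mk_mul, topLeft_mk, topLeft_mk, topLeft_mk]

theorem topLeftHom_surjective :
    Function.Surjective (topLeftHom : AGL n F1 F2 →+* Matrix (Fin n) (Fin n) F1) :=
  fun A => ⟨mk A 0 0, topLeft_mk A 0 0⟩

/-- The conjugate, by the unipotent element attached to the column `x`, of the block-diagonal
subring `Matₙ(F1) × F2`; these are the complements of the column ideal. -/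
def levi (F1 F2 : Subfield F) (x : Fin n → F) : NonUnitalSubring (AGL n F1 F2) where
  carrier := {M | ∃ A, ∃ b : F2, M = mk A (act A x - (b : F) • x) b}
  zero_mem' := ⟨0, 0, by rw [act_zero_left, ZeroMemClass.coe_zero, zero_smul, sub_zero, mk_zero]⟩
  add_mem' := by
    rintro _ _ ⟨A, b, rfl⟩ ⟨A', b', rfl⟩
    refine ⟨A + A', b + b', ?_⟩
    rw [mk_add, act_add_left, mk_inj]
    refine ⟨rfl, ?_, rfl⟩
    push_cast
    module
  neg_mem' := by
    rintro _ ⟨A, b, rfl⟩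
    refine ⟨-A, -b, ?_⟩
    rw [mk_neg, act_neg_left, mk_inj]
    refine ⟨rfl, ?_, rfl⟩
    push_cast
    module
  mul_mem' := by
    rintro _ _ ⟨A, b, rfl⟩ ⟨A', b', rfl⟩
    refine ⟨A * A', b * b', ?_⟩
    rw [mk_mul, act_mul, mk_inj, act_sub_right, act_smul_right]
    refine ⟨rfl, ?_, rfl⟩
    push_cast
    module

end AGLcoords

/-! ### Lower bound for covers of the ring of affine type -/

/-- A generator of the unit group of a finite field lies in no proper subring. -/
theorem exists_ringGenerator (K : Type) [Field K] [Finite K] :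
    ∃ u : K, u ≠ 0 ∧ ∀ S : NonUnitalSubring K, u ∈ S → ∀ b, b ∈ S := by
  obtain ⟨g, hg⟩ := IsCyclic.exists_generator (α := Kˣ)
  refine ⟨g, g.ne_zero, fun S hS b => ?_⟩
  have hpow : ∀ i : ℕ, (g : K) ^ (i + 1) ∈ S := by
    intro i
    induction i with
    | zero => simpa using hS
    | succ i ih => rw [pow_succ]; exact S.mul_mem ih hS
  by_cases hb : b = 0
  · rw [hb]; exact S.zero_mem
  · obtain ⟨i, hi⟩ := (mem_powers_iff_mem_zpowers (x := g)).2 (hg (Units.mk0 b hb))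
    have hi' : (g : K) ^ i = b := by
      have := congrArg Units.val hi
      simpa using this
    -- `i` may be `0`; shifting by the order of `g` makes the exponent positive
    have h2 : (g : K) ^ (i + orderOf g) = b := by
      rw [pow_add, hi', ← Units.val_pow_eq_pow_val, pow_orderOf_eq_one, Units.val_one, mul_one]
    have h3 := orderOf_pos g
    have := hpow (i + orderOf g - 1)
    rwa [show i + orderOf g - 1 + 1 = i + orderOf g by omega, h2] at this

/-- A nonzero additive subgroup of `F` stable under two subfields which together generate `F` is
everything: its ring of multipliers is a subfield containing both. -/
theorem addSubgroup_eq_top_of_stable {F : Type} [Field F] [Finite F] {F1 F2 : Subfield F}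
    (hcomp : F1 ⊔ F2 = ⊤) (Y : AddSubgroup F) (h1 : ∀ a ∈ F1, ∀ y ∈ Y, a * y ∈ Y)
    (h2 : ∀ a ∈ F2, ∀ y ∈ Y, a * y ∈ Y) {z : F} (hz : z ∈ Y) (hz0 : z ≠ 0) (w : F) : w ∈ Y := by
  have := Fintype.ofFinite F
  let K : Subfield F :=
    { carrier := {c | ∀ y ∈ Y, c * y ∈ Y}
      zero_mem' := fun y _ => by rw [zero_mul]; exact Y.zero_mem
      one_mem' := fun y hy => by rwa [one_mul]
      add_mem' := fun {a b} ha hb y hy => by rw [add_mul]; exact Y.add_mem (ha y hy) (hb y hy)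
      neg_mem' := fun {a} ha y hy => by rw [neg_mul]; exact Y.neg_mem (ha y hy)
      mul_mem' := fun {a b} ha hb y hy => by rw [mul_assoc]; exact ha _ (hb y hy)
      inv_mem' := fun a ha y hy => by
        by_cases ha0 : a = 0
        · rw [ha0, inv_zero, zero_mul]; exact Y.zero_mem
        -- multiplication by `a` is an injective self-map of the finite set `Y`
        let m : Y → Y := fun y => ⟨a * y, ha _ y.2⟩
        have hm : Function.Injective m := fun s t h => by
          have := congrArg Subtype.val h
          exact Subtype.ext (mul_left_cancel₀ ha0 this)
        obtain ⟨t, ht⟩ := Finite.surjective_of_injective hm ⟨y, hy⟩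
        have ht' : a * (t : F) = y := congrArg Subtype.val ht
        rw [← ht', inv_mul_cancel_left₀ ha0]
        exact t.2 }
  have hK : K = ⊤ := top_le_iff.1 (hcomp ▸ sup_le (show F1 ≤ K from fun a ha => h1 a ha)
    (show F2 ≤ K from fun a ha => h2 a ha))
  have hw : w * z⁻¹ ∈ K := hK ▸ Subfield.mem_top _
  have := hw z hz
  rwa [inv_mul_cancel_right₀ hz0] at this

section lower

variable {n : ℕ} {F : Type} [Field F] [Finite F] {F1 F2 : Subfield F}

/-- A subring containing two distinct complements meets the column ideal, which is a minimal
ideal, hence contains it. -/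
theorem eq_top_of_levi_le (hcomp : F1 ⊔ F2 = ⊤) {T : NonUnitalSubring (AGL n F1 F2)}
    {x x' : Fin n → F} (hx : levi F1 F2 x ≤ T) (hx' : levi F1 F2 x' ≤ T) (hne : x ≠ x') :
    T = ⊤ := by
  have hmem : ∀ A (b : F2), mk A (act A x - (b : F) • x) b ∈ T := fun A b => hx ⟨A, b, rfl⟩
  have hmem' : ∀ A (b : F2), mk A (act A x' - (b : F) • x') b ∈ T := fun A b => hx' ⟨A, b, rfl⟩
  have hleft : ∀ (A : Matrix (Fin n) (Fin n) F1) y, mk (F1 := F1) (F2 := F2) 0 y 0 ∈ T →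
      mk (F1 := F1) (F2 := F2) 0 (act A y) 0 ∈ T := by
    intro A y hy
    have := T.mul_mem (hmem A 0) hy
    rw [mk_mul] at this
    simpa using this
  have hright : ∀ (b : F2) y, mk (F1 := F1) (F2 := F2) 0 y 0 ∈ T →
      mk (F1 := F1) (F2 := F2) 0 ((b : F) • y) 0 ∈ T := by
    intro b y hy
    have := T.mul_mem hy (hmem 0 b)
    rw [mk_mul, act_zero_left] at this
    simpa using this
  have hz : mk (F1 := F1) (F2 := F2) 0 (x - x') 0 ∈ T := by
    have := T.sub_mem (hmem 1 0) (hmem' 1 0)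
    rw [mk_sub, act_one_left, act_one_left] at this
    simpa using this
  obtain ⟨j, hj⟩ := Function.ne_iff.1 hne
  have hact : ∀ (i j : Fin n) (c : F1) (y : Fin n → F),
      act (Matrix.single i j c) y = Pi.single i ((c : F) * y j) := by
    intro i j c y
    ext k
    by_cases hk : k = i
    · subst hk
      rw [act, Finset.sum_eq_single j] <;> simp +contextual [eq_comm]
    · simp [act, Ne.symm hk, hk]
  have hcol : ∀ i c, mk (F1 := F1) (F2 := F2) 0 (Pi.single i c) 0 ∈ T := by
    intro i
    let Y : AddSubgroup F :=
      { carrier := {c | mk (F1 := F1) (F2 := F2) 0 (Pi.single i c) 0 ∈ T}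
        zero_mem' := by
          have := T.zero_mem
          rw [← mk_zero] at this
          simpa using this
        add_mem' := fun {a b} ha hb => by
          have := T.add_mem ha hb
          rw [mk_add, ← Pi.single_add] at this
          simpa using this
        neg_mem' := fun {a} ha => by
          have := T.neg_mem ha
          rw [mk_neg, ← Pi.single_neg] at this
          simpa using this }
    refine addSubgroup_eq_top_of_stable hcomp Y (fun a ha y hy => ?_) (fun a ha y hy => ?_)
      (z := x j - x' j) ?_ (sub_ne_zero.2 hj)
    · show mk (F1 := F1) (F2 := F2) 0 (Pi.single i _) 0 ∈ T
      have := hleft (Matrix.single i i ⟨a, ha⟩) _ hy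
      rw [hact] at this
      simpa using this
    · show mk (F1 := F1) (F2 := F2) 0 (Pi.single i _) 0 ∈ T
      have := hright ⟨a, ha⟩ _ hy
      rw [← Pi.single_smul] at this
      simpa using this
    · show mk (F1 := F1) (F2 := F2) 0 (Pi.single i _) 0 ∈ T
      have := hleft (Matrix.single i j 1) _ hz
      rw [hact] at this
      simpa using this
  have hJ : ∀ y, mk (F1 := F1) (F2 := F2) 0 y 0 ∈ T := by
    intro y
    let g : (Fin n → F) →+ AGL n F1 F2 :=
      { toFun := fun y => mk 0 y 0
        map_zero' := mk_zero
        map_add' := fun y y' => by rw [mk_add]; simp }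
    have : g y = ∑ i, g (Pi.single i (y i)) := by
      rw [← map_sum, Finset.univ_sum_single]
    change g y ∈ T
    rw [this]
    exact T.sum_mem fun i _ => hcol i _
  refine eq_top_iff.2 fun M _ => ?_
  obtain ⟨A, y, b, rfl⟩ := exists_mk M
  have := T.add_mem (hmem A b) (hJ (y - (act A x - (b : F) • x)))
  rw [mk_add] at this
  simpa using this

omit [Finite F] in
/-- Inside the complement `levi F1 F2 x ≅ Matₙ(F1) × F2`, a subring which surjects onto `Matₙ(F1)`
and contains an element whose last coordinate generates `F2` is everything: `Matₙ(F1)` is spanned by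
products of commutators, whose `F2`-coordinate vanishes. -/
theorem levi_le_of_surjects (hn : 2 ≤ n) {u : F2} (hu : ∀ S : NonUnitalSubring F2, u ∈ S → ∀ b, b ∈ S)
    {T : NonUnitalSubring (AGL n F1 F2)} {x : Fin n → F}
    (hsurj : ∀ A, ∃ b : F2, mk A (act A x - (b : F) • x) b ∈ T)
    {A₀ : Matrix (Fin n) (Fin n) F1} (hA₀ : mk A₀ (act A₀ x - (u : F) • x) u ∈ T) :
    levi F1 F2 x ≤ T := by
  let e : Matrix (Fin n) (Fin n) F1 → F2 → AGL n F1 F2 :=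
    fun A b => mk A (act A x - (b : F) • x) b
  have he_add : ∀ A A' b b', e A b + e A' b' = e (A + A') (b + b') := by
    intro A A' b b'
    simp only [e]
    rw [mk_add, act_add_left, mk_inj]
    refine ⟨rfl, ?_, rfl⟩
    push_cast
    module
  have he_neg : ∀ A b, -e A b = e (-A) (-b) := by
    intro A b
    simp only [e]
    rw [mk_neg, act_neg_left, mk_inj]
    refine ⟨rfl, ?_, rfl⟩
    push_cast
    module
  have he_mul : ∀ A A' b b', e A b * e A' b' = e (A * A') (b * b') := by
    intro A A' b b'
    simp only [e]
    rw [mk_mul, act_mul, mk_inj, act_sub_right, act_smul_right]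
    refine ⟨rfl, ?_, rfl⟩
    push_cast
    module
  have he_zero : e 0 0 = 0 := by
    simp only [e]
    rw [act_zero_left, ZeroMemClass.coe_zero, zero_smul, sub_zero, mk_zero]
  have hcomm : ∀ A A', e (A * A' - A' * A) 0 ∈ T := by
    intro A A'
    obtain ⟨b, hb⟩ := hsurj A
    obtain ⟨b', hb'⟩ := hsurj A'
    have := T.add_mem (T.mul_mem hb hb') (T.neg_mem (T.mul_mem hb' hb))
    change e A b * e A' b' + -(e A' b' * e A b) ∈ T at this
    rwa [he_mul, he_mul, he_neg, he_add, mul_comm b' b, add_neg_cancel, ← sub_eq_add_neg] at this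
  have hoff : ∀ (i j : Fin n) (c : F1), i ≠ j → e (Matrix.single i j c) 0 ∈ T := by
    intro i j c hij
    have := hcomm (Matrix.single i i 1) (Matrix.single i j c)
    rwa [Matrix.single_mul_single_same, Matrix.single_mul_single_of_ne _ _ _ _ hij.symm, one_mul,
      sub_zero] at this
  have hsingle : ∀ (i j : Fin n) (c : F1), e (Matrix.single i j c) 0 ∈ T := by
    intro i j c
    by_cases hij : i = j
    · subst hij
      have : Nontrivial (Fin n) := Fin.nontrivial_iff_two_le.2 hn
      obtain ⟨k, hk⟩ := exists_ne i
      have := T.mul_mem (hoff i k c hk.symm) (hoff k i 1 hk)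
      rwa [he_mul, Matrix.single_mul_single_same, mul_one, mul_zero] at this
    · exact hoff i j c hij
  have hall : ∀ A, e A 0 ∈ T := by
    let g : Matrix (Fin n) (Fin n) F1 →+ AGL n F1 F2 :=
      { toFun := fun A => e A 0
        map_zero' := he_zero
        map_add' := fun A A' => by rw [he_add, add_zero] }
    intro A
    change g A ∈ T
    rw [Matrix.matrix_eq_sum_single A, map_sum]
    refine T.sum_mem fun i _ => ?_
    rw [map_sum]
    exact T.sum_mem fun j _ => hsingle i j _
  let S : NonUnitalSubring F2 :=
    { carrier := {b | e 0 b ∈ T}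
      zero_mem' := hall 0
      add_mem' := fun {a b} ha hb => by
        have := T.add_mem ha hb
        rwa [he_add, add_zero] at this
      neg_mem' := fun {a} ha => by
        have := T.neg_mem ha
        rwa [he_neg, neg_zero] at this
      mul_mem' := fun {a b} ha hb => by
        have := T.mul_mem ha hb
        rwa [he_mul, mul_zero] at this }
  have hS : u ∈ S := by
    have := T.add_mem hA₀ (hall (-A₀))
    change e A₀ u + e (-A₀) 0 ∈ T at this
    rwa [he_add, add_neg_cancel, add_zero] at this
  rintro _ ⟨A, b, rfl⟩
  have := T.add_mem (hall A) (hu S hS b)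
  rwa [he_add, add_zero, zero_add] at this

/-- A cover either contains overrings of all `|F|ⁿ` complements, which are pairwise distinct, or
misses some complement and then induces a cover of `Matₙ(F1)`. -/
theorem min_le_coveringNumber (hn : 2 ≤ n) (hcomp : F1 ⊔ F2 = ⊤) :
    min ((Nat.card F ^ n : ℕ) : ℕ∞) (coveringNumber (Matrix (Fin n) (Fin n) F1)) ≤
      coveringNumber (AGL n F1 F2) := by
  have := Fintype.ofFinite F
  refine le_coveringNumber fun C hC => ?_
  by_cases hall : ∀ x : Fin n → F, ∃ T ∈ C, levi F1 F2 x ≤ T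
  · refine (min_le_left _ _).trans ?_
    choose f hfC hf using hall
    have hinj : Function.Injective f := fun x x' h => by
      by_contra hne
      exact hC.1 _ (hfC x) (eq_top_of_levi_le hcomp (hf x) (h ▸ hf x') hne)
    have h1 : (Finset.univ.image f).card = Nat.card F ^ n := by
      rw [Finset.card_image_of_injective _ hinj, Finset.card_univ]
      simp
    rw [← h1]
    exact_mod_cast Finset.card_le_card (Finset.image_subset_iff.2 fun x _ => hfC x)
  · push Not at hall
    obtain ⟨x, hx⟩ := hall
    refine (min_le_right _ _).trans ?_
    obtain ⟨u, -, hu⟩ := exists_ringGenerator F2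
    let π : NonUnitalSubring (AGL n F1 F2) → NonUnitalSubring (Matrix (Fin n) (Fin n) F1) :=
      fun T => (T ⊓ levi F1 F2 x).map (topLeftHom (F1 := F1) (F2 := F2) : _ →+* _)
    let C' := C.filter fun T => ∃ A, mk A (act A x - (u : F) • x) u ∈ T
    refine (coveringNumber_le_card (C := C'.image π) ⟨?_, ?_⟩).trans ?_
    · intro P hP h
      obtain ⟨T, hT, rfl⟩ := Finset.mem_image.1 hP
      obtain ⟨hTC, A₀, hA₀⟩ := Finset.mem_filter.1 hT
      refine hx T hTC (levi_le_of_surjects hn hu (fun A => ?_) hA₀)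
      have hA : A ∈ π T := h ▸ NonUnitalSubring.mem_top A
      obtain ⟨M, ⟨hM, A', b, rfl⟩, hMA⟩ := hA
      have : A' = A := (topLeft_mk _ _ _).symm.trans hMA
      subst this
      exact ⟨b, hM⟩
    · intro A
      obtain ⟨T, hT, hA⟩ := hC.2 (mk A (act A x - (u : F) • x) u)
      exact ⟨π T, Finset.mem_image_of_mem _ (Finset.mem_filter.2 ⟨hT, A, hA⟩),
        _, ⟨hA, A, u, rfl⟩, topLeft_mk _ _ _⟩
    · exact_mod_cast Finset.card_image_le.trans (Finset.card_filter_le _ _)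

end lower

/-! ### Counting embeddings of an extension field -/

section embeddings

variable {k : Type} [Field k] [Finite k] {L : Type} [Field L] [Finite L] [Algebra k L]

omit [Finite k] [Finite L] in
theorem finrank_dvd_of_algHom {n : ℕ} [FiniteDimensional k L]
    (ρ : L →ₐ[k] Module.End k (Fin n → k)) : Module.finrank k L ∣ n := by
  let _ : Module L (Fin n → k) := Module.compHom (Fin n → k) (ρ : L →+* Module.End k (Fin n → k))
  have : IsScalarTower k L (Fin n → k) := ⟨fun c l v => by
    change ρ (c • l) v = c • ρ l v
    rw [map_smul, LinearMap.smul_apply]⟩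
  exact ⟨Module.finrank L (Fin n → k), by rw [Module.finrank_mul_finrank, Module.finrank_fin_fun]⟩

omit [Finite k] [Finite L] in
/-- An `L`-structure on `kⁿ` extending its `k`-structure is isomorphic to `Lᵐ`. -/
theorem exists_semilinear_equiv {n m : ℕ} (hL : Module.finrank k L * m = n)
    [FiniteDimensional k L]
    (ρ : L →ₐ[k] Module.End k (Fin n → k)) :
    ∃ φ : (Fin m → L) ≃ₗ[k] (Fin n → k), ∀ l u, φ (l • u) = ρ l (φ u) := by
  let _ : Module L (Fin n → k) := Module.compHom (Fin n → k) (ρ : L →+* Module.End k (Fin n → k))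
  have hsmul : ∀ (l : L) (v : Fin n → k), l • v = ρ l v := fun _ _ => rfl
  have : IsScalarTower k L (Fin n → k) := ⟨fun c l v => by
    rw [hsmul, hsmul, map_smul, LinearMap.smul_apply]⟩
  have : Module.Finite L (Fin n → k) := Module.Finite.of_restrictScalars_finite k L _
  have h1 : Module.finrank k L * Module.finrank L (Fin n → k) = n := by
    rw [Module.finrank_mul_finrank, Module.finrank_fin_fun]
  have h2 : Module.finrank L (Fin m → L) = Module.finrank L (Fin n → k) := by
    rw [Module.finrank_fin_fun]
    exact Nat.eq_of_mul_eq_mul_left Module.finrank_pos (hL.trans h1.symm)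
  let φ := LinearEquiv.ofFinrankEq (Fin m → L) (Fin n → k) h2
  exact ⟨φ.restrictScalars k, fun l u => φ.map_smul l u⟩

/-- Composing an `L`-isomorphism `Lᵐ ≃ kⁿ` with `GLₘ(L)` injects pairs `(ρ, g)` into the
`k`-isomorphisms `Lᵐ ≃ kⁿ`, of which there are as many as elements of `GLₙ(k)`. -/
theorem card_algHom_mul_card_GL_le {n m : ℕ} (hL : Module.finrank k L * m = n) :
    Nat.card (L →ₐ[k] Module.End k (Fin n → k)) * Nat.card (Matrix.GeneralLinearGroup (Fin m) L) ≤
      Nat.card (Matrix.GeneralLinearGroup (Fin n) k) := by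
  classical
  have e0 : (Fin m → L) ≃ₗ[k] (Fin n → k) := LinearEquiv.ofFinrankEq _ _ (by
    rw [Module.finrank_pi_fintype, Module.finrank_fin_fun]; simp [← hL, mul_comm])
  choose φ hφ using fun ρ => exists_semilinear_equiv (k := k) (L := L) hL ρ
  rw [Nat.card_congr (Matrix.GeneralLinearGroup.toLin (n := Fin m) (R := L)).toEquiv,
    Nat.card_congr (LinearMap.GeneralLinearGroup.generalLinearEquiv L (Fin m → L)).toEquiv,
    Nat.card_congr (Matrix.GeneralLinearGroup.toLin (n := Fin n) (R := k)).toEquiv,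
    Nat.card_congr (LinearMap.GeneralLinearGroup.generalLinearEquiv k (Fin n → k)).toEquiv,
    ← Nat.card_prod]
  have : Finite ((Fin n → k) ≃ₗ[k] (Fin n → k)) := DFunLike.finite _
  refine Nat.card_le_card_of_injective
    (fun x : (L →ₐ[k] Module.End k (Fin n → k)) × ((Fin m → L) ≃ₗ[L] (Fin m → L)) =>
      e0.symm.trans ((x.2.restrictScalars k).trans (φ x.1))) ?_
  rintro ⟨ρ, g⟩ ⟨ρ', g'⟩ h
  have h1 : ∀ u, φ ρ (g u) = φ ρ' (g' u) := fun u => by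
    have := congrArg (fun f => f (e0 u)) h
    simpa using this
  have hρ : ρ = ρ' := by
    ext1 l
    refine LinearMap.ext fun v => ?_
    obtain ⟨u, rfl⟩ : ∃ u, φ ρ (g u) = v := ⟨g.symm ((φ ρ).symm v), by simp⟩
    rw [← hφ, ← g.map_smul, h1, g'.map_smul, hφ, h1]
  subst hρ
  refine Prod.ext rfl (LinearEquiv.ext fun u => (φ ρ).injective (h1 u))

theorem card_algHom_add_le {n m a : ℕ} (ha : Module.finrank k L = a) (ha2 : 2 ≤ a)
    (hm : 1 ≤ m) (hn : a * m = n) :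
    Nat.card (L →ₐ[k] Module.End k (Fin n → k)) + Nat.card k ^ (n * (n - m) - 1) ≤
      Nat.card k ^ (n * (n - m)) := by
  classical
  have hkf := Fintype.ofFinite k
  have hLf := Fintype.ofFinite L
  set Q := Nat.card k with hQ
  have hQ1 : 1 < Q := Finite.one_lt_card
  have hQk : Fintype.card k = Q := by rw [hQ, Nat.card_eq_fintype_card]
  have hQL : Fintype.card L = Q ^ a := by
    rw [Module.card_eq_pow_finrank (K := k), ha, hQk]
  have hcount := card_algHom_mul_card_GL_le (k := k) (L := L) (n := n) (m := m) (by rw [ha, hn])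
  rw [Matrix.card_GL_field, Matrix.card_GL_field, hQk, hQL,
    Fin.prod_univ_eq_prod_range (fun i => Q ^ n - Q ^ i) n,
    Fin.prod_univ_eq_prod_range (fun i => (Q ^ a) ^ m - (Q ^ a) ^ i) m] at hcount
  set H := Nat.card (L →ₐ[k] Module.End k (Fin n → k))
  have hamn : m < n := by nlinarith
  -- the exponents divisible by `a` account for `GLₘ(L)`
  let D := (Finset.range m).image (a * ·)
  have hD : D ⊆ Finset.range n := by
    intro i hi
    obtain ⟨j, hj, rfl⟩ := Finset.mem_image.1 hi
    rw [Finset.mem_range] at hj ⊢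
    rw [← hn]
    exact Nat.mul_lt_mul_of_pos_left hj (by omega)
  have hinj : Function.Injective (a * ·) := fun x y h =>
    Nat.eq_of_mul_eq_mul_left (by omega : 0 < a) h
  have hDprod : ∏ i ∈ D, (Q ^ n - Q ^ i) = ∏ i ∈ Finset.range m, ((Q ^ a) ^ m - (Q ^ a) ^ i) := by
    rw [Finset.prod_image (fun x _ y _ h => hinj h)]
    refine Finset.prod_congr rfl fun j _ => ?_
    rw [← pow_mul, ← pow_mul, hn]
  have hDcard : D.card = m := by
    rw [Finset.card_image_of_injective _ hinj, Finset.card_range]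
  have hlast : n - 1 ∈ Finset.range n \ D := by
    rw [Finset.mem_sdiff, Finset.mem_range]
    refine ⟨by omega, fun h => ?_⟩
    obtain ⟨j, -, hj⟩ := Finset.mem_image.1 h
    have h1 : a ∣ n - 1 := ⟨j, hj.symm⟩
    have h2 : a ∣ n := ⟨m, hn.symm⟩
    have h3 : a ∣ 1 := by
      have := Nat.dvd_sub h2 h1
      rwa [show n - (n - 1) = 1 by omega] at this
    have := Nat.le_of_dvd one_pos h3
    omega
  rw [← Finset.prod_sdiff hD, hDprod] at hcount
  have hpos : 0 < ∏ i ∈ Finset.range m, ((Q ^ a) ^ m - (Q ^ a) ^ i) := by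
    refine Finset.prod_pos fun i hi => Nat.sub_pos_of_lt ?_
    exact Nat.pow_lt_pow_right (Nat.one_lt_pow (by omega) hQ1) (Finset.mem_range.1 hi)
  have hH := Nat.le_of_mul_le_mul_right hcount hpos
  rw [← Finset.mul_prod_erase _ _ hlast] at hH
  have hrest : ∏ i ∈ (Finset.range n \ D).erase (n - 1), (Q ^ n - Q ^ i) ≤
      (Q ^ n) ^ (n - m - 1) := by
    refine (Finset.prod_le_pow_card _ _ (Q ^ n) fun i _ => Nat.sub_le _ _).trans_eq ?_
    rw [Finset.card_erase_of_mem hlast, Finset.card_sdiff_of_subset hD, hDcard, Finset.card_range]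
  have hH' := hH.trans (Nat.mul_le_mul_left _ hrest)
  have e1 : Q ^ (n * (n - m)) = Q ^ n * (Q ^ n) ^ (n - m - 1) := by
    rw [← pow_mul, ← pow_add]
    congr 1
    obtain ⟨t, ht⟩ : ∃ t, n - m = t + 1 := ⟨n - m - 1, by omega⟩
    rw [ht]; simp; ring
  have e2 : Q ^ (n * (n - m) - 1) = Q ^ (n - 1) * (Q ^ n) ^ (n - m - 1) := by
    rw [← pow_mul, ← pow_add]
    congr 1
    obtain ⟨t, ht⟩ : ∃ t, n - m = t + 1 := ⟨n - m - 1, by omega⟩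
    rw [ht, mul_add, mul_one, Nat.add_sub_cancel]
    omega
  rw [e1, e2]
  have hle : Q ^ (n - 1) ≤ Q ^ n := Nat.pow_le_pow_right (by omega) (by omega)
  calc _ ≤ (Q ^ n - Q ^ (n - 1)) * (Q ^ n) ^ (n - m - 1) + Q ^ (n - 1) * (Q ^ n) ^ (n - m - 1) := by
        gcongr
    _ = _ := by rw [← add_mul, Nat.sub_add_cancel hle]

end embeddings

/-! ### Covering matrix rings -/

section matrixCover

variable {k : Type} [Field k] [Finite k]

/-- Either `A` preserves a nonzero subspace spanned by few vectors, or `k[A]` is a field of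
degree `n` over `k`, so `A` commutes with a copy of every extension whose degree divides `n`. -/
theorem stabilizes_or_commutes {n N : ℕ} (hn : n ≠ 0) (hN : n ≤ 2 * (N + 1))
    {L : Type} [Field L] [Finite L] [Algebra k L] (hL : Module.finrank k L ∣ n)
    (A : Module.End k (Fin n → k)) :
    (∃ t : Fin (N + 1) → (Fin n → k), t 0 ≠ 0 ∧
      ∀ w ∈ Submodule.span k (Set.range t), A w ∈ Submodule.span k (Set.range t)) ∨
    ∃ ρ : L →ₐ[k] Module.End k (Fin n → k), ∀ l, ρ l * A = A * ρ l := by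
  by_cases h : ∃ g : Polynomial k, g ≠ 0 ∧ g.natDegree ≤ N + 1 ∧ ∃ v, v ≠ 0 ∧
      Polynomial.aeval A g v = 0
  · obtain ⟨g, hg0, hgN, v, hv0, hv⟩ := h
    left
    refine ⟨fun i => (A ^ (i : ℕ)) v, by simpa using hv0, ?_⟩
    set T := Submodule.span k (Set.range fun i : Fin (N + 1) => (A ^ (i : ℕ)) v) with hT
    have hp : ∀ p : Polynomial k, Polynomial.aeval A p v ∈ T := by
      intro p
      have h1 : Polynomial.aeval A p v = Polynomial.aeval A (p % g) v := by
        conv_lhs => rw [← EuclideanDomain.mod_add_div p g, mul_comm]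
        simp [hv]
      rw [h1]
      by_cases hr : p % g = 0
      · rw [hr]; simp
      have h2 : (p % g).natDegree < N + 1 :=
        (Polynomial.natDegree_lt_natDegree hr (EuclideanDomain.mod_lt p hg0)).trans_le hgN
      rw [Polynomial.aeval_eq_sum_range' h2, LinearMap.sum_apply]
      refine T.sum_mem fun i hi => ?_
      rw [LinearMap.smul_apply]
      exact T.smul_mem _ (Submodule.subset_span ⟨⟨i, Finset.mem_range.1 hi⟩, rfl⟩)
    intro w hw
    induction hw using Submodule.span_induction with
    | mem x hx =>
      obtain ⟨i, rfl⟩ := hx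
      have := hp (Polynomial.X ^ ((i : ℕ) + 1))
      rw [map_pow, Polynomial.aeval_X, pow_succ'] at this
      exact this
    | zero => rw [map_zero]; exact T.zero_mem
    | add x y _ _ hx hy => rw [map_add]; exact T.add_mem hx hy
    | smul c x _ hx => rw [map_smul]; exact T.smul_mem c hx
  · right
    push Not at h
    have : Nonempty (Fin n) := ⟨⟨0, Nat.pos_of_ne_zero hn⟩⟩
    have hint : IsIntegral k A := Algebra.IsIntegral.isIntegral A
    set P := minpoly k A with hP
    have hP0 : P ≠ 0 := minpoly.ne_zero hint
    have hPn : P.natDegree ≤ n := by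
      have h1 := Polynomial.natDegree_le_of_dvd (LinearMap.minpoly_dvd_charpoly A)
        A.charpoly_monic.ne_zero
      rwa [LinearMap.charpoly_natDegree, Module.finrank_fin_fun] at h1
    have hunit : ∀ f g, f * g = P → f.natDegree ≤ N + 1 → IsUnit f := by
      intro f g hfg hf
      have hf0 : f ≠ 0 := by rintro rfl; exact hP0 (by rw [← hfg, zero_mul])
      have hg0 : g ≠ 0 := by rintro rfl; exact hP0 (by rw [← hfg, mul_zero])
      have hgA : Polynomial.aeval A g = 0 := by
        refine LinearMap.ext fun v => ?_
        by_contra hv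
        refine h f hf0 hf _ hv ?_
        rw [← Module.End.mul_apply, ← map_mul, hfg, hP, minpoly.aeval, LinearMap.zero_apply]
      have h1 : f * g ∣ g := hfg ▸ minpoly.dvd k A hgA
      have h2 : f * g ∣ 1 * g := by rwa [one_mul]
      exact isUnit_of_dvd_one ((mul_dvd_mul_iff_right hg0).1 h2)
    have hirr : Irreducible P := by
      refine ⟨minpoly.not_isUnit k A, fun f g hfg => ?_⟩
      have hf0 : f ≠ 0 := by rintro rfl; exact hP0 (by rw [hfg, zero_mul])
      have hg0 : g ≠ 0 := by rintro rfl; exact hP0 (by rw [hfg, mul_zero])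
      have hdeg := Polynomial.natDegree_mul hf0 hg0
      rw [← hfg] at hdeg
      by_cases hf : f.natDegree ≤ N + 1
      · exact Or.inl (hunit f g hfg.symm hf)
      · exact Or.inr (hunit g f (by rw [mul_comm, ← hfg]) (by omega))
    have hPN : N + 1 < P.natDegree := by
      by_contra hle
      refine h P hP0 (by omega) 1 one_ne_zero ?_
      rw [hP, minpoly.aeval, LinearMap.zero_apply]
    have : Fact (Irreducible P) := ⟨hirr⟩
    let pb := AdjoinRoot.powerBasis hP0
    have : FiniteDimensional k (AdjoinRoot P) := pb.finite
    have hfin : Module.finrank k (AdjoinRoot P) = P.natDegree := by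
      rw [pb.finrank, AdjoinRoot.powerBasis_dim]
    let ρ₀ : AdjoinRoot P →ₐ[k] Module.End k (Fin n → k) :=
      Ideal.Quotient.liftₐ (Ideal.span {P}) (Polynomial.aeval A) fun f hf => by
        obtain ⟨g, rfl⟩ := Ideal.mem_span_singleton.1 hf
        rw [map_mul, hP, minpoly.aeval, zero_mul]
    have hroot : ρ₀ (AdjoinRoot.root P) = A := Polynomial.aeval_X A
    have hdvd : P.natDegree ∣ n := hfin ▸ finrank_dvd_of_algHom ρ₀
    have hPeq : P.natDegree = n := by
      obtain ⟨c, hc⟩ := hdvd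
      rcases c with _ | _ | c
      · omega
      · omega
      · nlinarith
    have : Finite (AdjoinRoot P) := Module.finite_of_finite k
    obtain ⟨σ⟩ : Nonempty (L →ₐ[k] AdjoinRoot P) :=
      FiniteField.nonempty_algHom_of_finrank_dvd (by rwa [hfin, hPeq])
    refine ⟨ρ₀.comp σ, fun l => ?_⟩
    rw [AlgHom.comp_apply, ← hroot, ← map_mul, ← map_mul, mul_comm]

/-- The nonzero subspaces of `kⁿ` spanned by `N + 1` vectors, the first of which is nonzero. -/
abbrev SmallSubspace (k : Type) [Field k] (n N : ℕ) : Type :=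
  {W : Submodule k (Fin n → k) // ∃ t : Fin (N + 1) → (Fin n → k), t 0 ≠ 0 ∧
    Submodule.span k (Set.range t) = W}

omit [Finite k] in
theorem span_update {n N : ℕ} (t : Fin (N + 2) → (Fin n → k)) (c : k) :
    Submodule.span k (Set.range (Function.update t 1 (t 1 + c • t 0))) =
      Submodule.span k (Set.range t) := by
  have h01 : (0 : Fin (N + 2)) ≠ 1 := by simp
  apply le_antisymm
  · rw [Submodule.span_le]
    rintro _ ⟨i, rfl⟩
    by_cases hi : i = 1
    · subst hi
      rw [Function.update_self]
      exact add_mem (Submodule.subset_span ⟨1, rfl⟩)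
        (Submodule.smul_mem _ _ (Submodule.subset_span ⟨0, rfl⟩))
    · rw [Function.update_of_ne hi]
      exact Submodule.subset_span ⟨i, rfl⟩
  · rw [Submodule.span_le]
    rintro _ ⟨i, rfl⟩
    set t' := Function.update t 1 (t 1 + c • t 0) with ht'
    have hmem : ∀ j, t' j ∈ Submodule.span k (Set.range t') :=
      fun j => Submodule.subset_span ⟨j, rfl⟩
    by_cases hi : i = 1
    · subst hi
      have h1 : t 1 = t' 1 - c • t' 0 := by
        rw [ht', Function.update_self, Function.update_of_ne h01, add_sub_cancel_right]
      rw [SetLike.mem_coe, h1]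
      exact sub_mem (hmem 1) (Submodule.smul_mem _ _ (hmem 0))
    · have := hmem i
      rwa [ht', Function.update_of_ne hi] at this

/-- Adding the `|k|` multiples of the first vector of a spanning tuple to the second one does not
change the span, so each subspace has at least `|k|` spanning tuples. -/
theorem card_smallSubspace_mul_le (n N : ℕ) :
    Nat.card (SmallSubspace k n (N + 1)) * Nat.card k ≤ Nat.card k ^ (n * (N + 2)) := by
  have h01 : (0 : Fin (N + 2)) ≠ 1 := by simp
  choose t ht0 ht using fun W : SmallSubspace k n (N + 1) => W.2
  have hcard : Nat.card k ^ (n * (N + 2)) = Nat.card (Fin (N + 2) → (Fin n → k)) := by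
    rw [pow_mul, Nat.card_fun, Nat.card_fun, Nat.card_fin, Nat.card_fin]
  rw [← Nat.card_prod, hcard]
  refine Nat.card_le_card_of_injective (fun x : SmallSubspace k n (N + 1) × k =>
    Function.update (t x.1) 1 (t x.1 1 + x.2 • t x.1 0)) ?_
  rintro ⟨W, c⟩ ⟨W', c'⟩ h
  dsimp only at h
  have hW : W = W' := by
    apply Subtype.ext
    rw [← ht W, ← ht W', ← span_update (t W) c, h, span_update]
  subst hW
  have h1 := congrFun h 1
  rw [Function.update_self, Function.update_self] at h1
  have h2 := smul_left_injective k (ht0 W) (add_left_cancel h1)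
  exact Prod.ext rfl h2

/-- The endomorphisms preserving a subspace. -/
def stab {n : ℕ} (W : Submodule k (Fin n → k)) : NonUnitalSubring (Module.End k (Fin n → k)) where
  carrier := {A | ∀ w ∈ W, A w ∈ W}
  zero_mem' := fun _ _ => W.zero_mem
  add_mem' := fun ha hb w hw => W.add_mem (ha w hw) (hb w hw)
  neg_mem' := fun ha w hw => W.neg_mem (ha w hw)
  mul_mem' := fun ha hb w hw => ha _ (hb w hw)

omit [Finite k] in
theorem stab_ne_top {n : ℕ} {W : Submodule k (Fin n → k)} {w : Fin n → k} (hw : w ∈ W)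
    (hw0 : w ≠ 0) (hW : W ≠ ⊤) : stab W ≠ ⊤ := by
  intro h
  refine hW (eq_top_iff.2 fun v _ => ?_)
  obtain ⟨j, hj⟩ := Function.ne_iff.1 hw0
  let B : Module.End k (Fin n → k) := (LinearMap.proj j).smulRight ((w j)⁻¹ • v)
  have hB : B ∈ stab W := h ▸ NonUnitalSubring.mem_top B
  have := hB w hw
  have hBw : B w = v := by
    change w j • (w j)⁻¹ • v = v
    exact smul_inv_smul₀ hj v
  rwa [hBw] at this

omit [Finite k] in
theorem centralizer_range_ne_top {n : ℕ} [NeZero n] {L : Type} [Field L] [Algebra k L]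
    (hL : Module.finrank k L ≠ 1) (ρ : L →ₐ[k] Module.End k (Fin n → k)) :
    NonUnitalSubring.centralizer (Set.range ρ) ≠ ⊤ := by
  intro h
  refine hL (Subalgebra.bot_eq_top_iff_finrank_eq_one.1 (eq_top_iff.2 fun l _ => ?_))
  have hc : ρ l ∈ Subalgebra.center k (Module.End k (Fin n → k)) := by
    rw [Subalgebra.mem_center_iff]
    intro B
    have hB : B ∈ NonUnitalSubring.centralizer (Set.range ρ) := h ▸ NonUnitalSubring.mem_top B
    exact ((NonUnitalSubring.mem_centralizer_iff.1 hB) _ ⟨l, rfl⟩).symm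
  rw [Algebra.IsCentral.center_eq_bot, Algebra.mem_bot] at hc
  obtain ⟨c, hc⟩ := hc
  rw [← ρ.commutes] at hc
  exact Algebra.mem_bot.2 ⟨c, ρ.toRingHom.injective hc⟩

/-- The cover of `Matₙ(k)`, `n ≥ 3`, by stabilizers of subspaces of dimension at most `n - n / a`
and centralizers of copies of the extension of degree `a = n.minFac`. -/
theorem coveringNumber_matrix_le {n : ℕ} (hn : 3 ≤ n) :
    coveringNumber (Matrix (Fin n) (Fin n) k) ≤
      ((Nat.card k ^ (n * (n - n / n.minFac)) : ℕ) : ℕ∞) := by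
  have : NeZero n := ⟨by omega⟩
  have ha2 : 2 ≤ n.minFac := (Nat.minFac_prime (by omega)).two_le
  obtain ⟨m, hm⟩ := Nat.minFac_dvd n
  set a := n.minFac with ha
  have hdiv : n / a = m := Nat.div_eq_of_eq_mul_right (by omega) hm
  have hm1 : 1 ≤ m := by
    rcases Nat.eq_zero_or_pos m with rfl | h
    · omega
    · exact h
  rw [hdiv]
  have hmn : 2 * m ≤ n := by
    conv_rhs => rw [hm]
    exact Nat.mul_le_mul_right _ ha2
  obtain ⟨N, hN⟩ : ∃ N, n - m = N + 2 := ⟨n - m - 2, by omega⟩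
  obtain ⟨p, hp⟩ := CharP.exists k
  have : Fact p.Prime := ⟨CharP.char_is_prime k p⟩
  have : NeZero a := ⟨by omega⟩
  let L := FiniteField.Extension k p a
  have hL : Module.finrank k L = a := FiniteField.finrank_extension k p a
  have h1 := card_algHom_add_le (k := k) (L := L) hL ha2 hm1 hm.symm
  have h2 := card_smallSubspace_mul_le (k := k) n N
  rw [← hN] at h2
  have hQ : 0 < Nat.card k := Nat.card_pos
  have h3 : Nat.card (SmallSubspace k n (N + 1)) ≤ Nat.card k ^ (n * (n - m) - 1) := by
    refine Nat.le_of_mul_le_mul_right (h2.trans_eq ?_) hQ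
    rw [← pow_succ, Nat.sub_add_cancel]
    exact Nat.mul_pos (by omega) (by omega)
  have hfin : Finite (L →ₐ[k] Module.End k (Fin n → k)) := by
    have : Finite (Module.End k (Fin n → k)) := DFunLike.finite _
    exact DFunLike.finite _
  let S : (L →ₐ[k] Module.End k (Fin n → k)) ⊕ SmallSubspace k n (N + 1) →
      NonUnitalSubring (Module.End k (Fin n → k)) :=
    Sum.elim (fun ρ => NonUnitalSubring.centralizer (Set.range ρ)) fun W => stab W.1
  let e : Matrix (Fin n) (Fin n) k ≃+* Module.End k (Fin n → k) :=
    (Matrix.toLinAlgEquiv' (R := k) (n := Fin n)).toRingEquiv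
  refine (coveringNumber_le_of_surjective (e : _ →ₙ+* _) e.surjective).trans
    ((coveringNumber_le_of_family S ?_ ?_).trans ?_)
  · rintro (ρ | ⟨W, t, ht0, rfl⟩)
    · exact centralizer_range_ne_top (by omega) ρ
    · refine stab_ne_top (w := t 0) (Submodule.subset_span ⟨0, rfl⟩) ht0 fun h => ?_
      have h4 := finrank_range_le_card (R := k) t
      change Submodule.span k (Set.range t) = ⊤ at h
      rw [Set.finrank, h, finrank_top, Module.finrank_fin_fun, Fintype.card_fin] at h4
      omega
  · intro A
    rcases stabilizes_or_commutes (N := N + 1) (L := L) (by omega : n ≠ 0) (by omega)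
      (by rw [hL]; exact ⟨m, hm⟩) A with ⟨t, ht0, ht⟩ | ⟨ρ, hρ⟩
    · exact ⟨Sum.inr ⟨_, t, ht0, rfl⟩, ht⟩
    · refine ⟨Sum.inl ρ, NonUnitalSubring.mem_centralizer_iff.2 ?_⟩
      rintro _ ⟨l, rfl⟩
      exact hρ l
  · rw [Nat.card_sum]
    exact_mod_cast (Nat.add_le_add_left h3 _).trans h1

/-- The matrices having `v` as an eigenvector. -/
def lineStab (v : Fin 2 → k) : NonUnitalSubring (Matrix (Fin 2) (Fin 2) k) where
  carrier := {M | ∃ c : k, M.mulVec v = c • v}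
  zero_mem' := ⟨0, by simp⟩
  add_mem' := by
    rintro A B ⟨c, hc⟩ ⟨d, hd⟩
    exact ⟨c + d, by rw [Matrix.add_mulVec, hc, hd, add_smul]⟩
  neg_mem' := by
    rintro A ⟨c, hc⟩
    exact ⟨-c, by rw [Matrix.neg_mulVec, hc, neg_smul]⟩
  mul_mem' := by
    rintro A B ⟨c, hc⟩ ⟨d, hd⟩
    exact ⟨d * c, by rw [← Matrix.mulVec_mulVec, hd, Matrix.mulVec_smul, hc, smul_smul]⟩

/-- A `2 × 2` matrix not fixing the line of `e₁` is an affine combination of `1` and a unique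
`!![0, b; 1, c]`. Centralizers of the latter cover everything but the line stabilizer of `e₁`; the
`|k| + 1` parameters with `b = 0` or `(b, c) = (1, 0)` are served by two more line
stabilizers, and this frees enough indices for all three of them. -/
theorem coveringNumber_matrix_two_le :
    coveringNumber (Matrix (Fin 2) (Fin 2) k) ≤ ((Nat.card k ^ 2 : ℕ) : ℕ∞) := by
  let S : k × k → NonUnitalSubring (Matrix (Fin 2) (Fin 2) k) := fun x =>
    if x = (1, 0) then lineStab ![1, 1] else if x = (0, 0) then lineStab ![0, 1]
    else if x.1 = 0 then lineStab ![1, 0]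
    else NonUnitalSubring.centralizer {!![0, x.1; 1, x.2]}
  have hS1 : S (1, 0) = lineStab ![1, 1] := by simp [S]
  have hS2 : S (0, 0) = lineStab ![0, 1] := by simp [S]
  have hS3 : S (0, 1) = lineStab ![1, 0] := by simp [S]
  refine (coveringNumber_le_of_family S ?_ ?_).trans_eq ?_
  · intro x
    simp only [S]
    split_ifs with h1 h2 h3
    · intro h
      have : !![1, 0; 0, 0] ∈ lineStab (k := k) ![1, 1] := h ▸ NonUnitalSubring.mem_top _
      obtain ⟨c, hc⟩ := this
      have h0 := congrFun hc 0
      have h1 := congrFun hc 1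
      simp [Matrix.mulVec, dotProduct, Fin.sum_univ_two] at h0 h1
      exact one_ne_zero (h0.trans h1.symm)
    · intro h
      have : !![0, 1; 0, 0] ∈ lineStab (k := k) ![0, 1] := h ▸ NonUnitalSubring.mem_top _
      obtain ⟨c, hc⟩ := this
      have h0 := congrFun hc 0
      simp [Matrix.mulVec, dotProduct, Fin.sum_univ_two] at h0
    · intro h
      have : !![0, 0; 1, 0] ∈ lineStab (k := k) ![1, 0] := h ▸ NonUnitalSubring.mem_top _
      obtain ⟨c, hc⟩ := this
      have h0 := congrFun hc 1
      simp [Matrix.mulVec, dotProduct, Fin.sum_univ_two] at h0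
    · intro h
      have : !![1, 0; 0, 0] ∈ NonUnitalSubring.centralizer {!![0, x.1; 1, x.2]} :=
        h ▸ NonUnitalSubring.mem_top _
      have := (NonUnitalSubring.mem_centralizer_iff.1 this) _ rfl
      have h0 := congrFun (congrFun this 1) 0
      simp [Matrix.mul_apply, Fin.sum_univ_two] at h0
  · intro A
    by_cases hs : A 1 0 = 0
    · refine ⟨(0, 1), hS3 ▸ ⟨A 0 0, ?_⟩⟩
      ext i
      fin_cases i <;> simp [Matrix.mulVec, dotProduct, Fin.sum_univ_two, hs]
    by_cases hr : A 0 1 = 0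
    · refine ⟨(0, 0), hS2 ▸ ⟨A 1 1, ?_⟩⟩
      ext i
      fin_cases i <;> simp [Matrix.mulVec, dotProduct, Fin.sum_univ_two, hr]
    by_cases h1 : A 0 1 / A 1 0 = 1 ∧ (A 1 1 - A 0 0) / A 1 0 = 0
    · have e1 : A 0 1 = A 1 0 := by
        have := h1.1
        rwa [div_eq_one_iff_eq hs] at this
      have e2 : A 1 1 = A 0 0 := by
        have := h1.2
        rw [div_eq_zero_iff, or_iff_left hs] at this
        exact sub_eq_zero.1 this
      refine ⟨(1, 0), hS1 ▸ ⟨A 0 0 + A 0 1, ?_⟩⟩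
      ext i
      fin_cases i <;> simp [Matrix.mulVec, dotProduct, Fin.sum_univ_two, e1, e2, add_comm]
    · refine ⟨(A 0 1 / A 1 0, (A 1 1 - A 0 0) / A 1 0), ?_⟩
      have hb : A 0 1 / A 1 0 ≠ 0 := div_ne_zero hr hs
      simp only [S]
      rw [if_neg (by simpa using h1), if_neg (by simp [hr, hs]), if_neg hb,
        NonUnitalSubring.mem_centralizer_iff]
      rintro _ rfl
      ext i j
      fin_cases i <;> fin_cases j <;> simp [Matrix.mul_apply, Fin.sum_univ_two] <;>
        field_simp <;> ring
  · rw [Nat.card_prod, sq]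

end matrixCover

end AGLCover

open AGLCover

/-- Theorem 3.8(2). -/
theorem AGL_not_sigmaElementary_of_large_d
    (p d1 d2 n d : ℕ) (hp : p.Prime) (hd1 : 1 ≤ d1) (hd2 : 1 ≤ d2) (hn : 2 ≤ n)
    (F : Type) [Field F] [Fintype F] (F1 F2 : Subfield F)
    (hF1 : Nat.card F1 = p ^ d1) (hF2 : Nat.card F2 = p ^ d2)
    (hF : Nat.card F = p ^ Nat.lcm d1 d2) (hcomp : F1 ⊔ F2 = ⊤)
    (hd : (p ^ d1) ^ d = p ^ Nat.lcm d1 d2) :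
    (n - n / n.minFac ≤ d →
      ¬ IsSigmaElementary ↥(AGL n F1 F2) ∧
        coveringNumber ↥(AGL n F1 F2) = coveringNumber (Matrix (Fin n) (Fin n) ↥F1)) ∧
    (n = 2 → ¬ IsSigmaElementary ↥(AGL n F1 F2)) := by
  have hp1 := hp.one_lt
  have hd0 : 1 ≤ d := by
    rcases Nat.eq_zero_or_pos d with rfl | h
    · have h1 : Nat.lcm d1 d2 ≠ 0 := Nat.lcm_ne_zero (by omega) (by omega)
      have h2 := Nat.one_lt_pow h1 hp1
      rw [pow_zero] at hd
      omega
    · exact h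
  have hsurj := topLeftHom_surjective (n := n) (F1 := F1) (F2 := F2)
  have key : n - n / n.minFac ≤ d →
      ¬ IsSigmaElementary ↥(AGL n F1 F2) ∧
        coveringNumber ↥(AGL n F1 F2) = coveringNumber (Matrix (Fin n) (Fin n) ↥F1) := by
    intro hnd
    have hle : coveringNumber (Matrix (Fin n) (Fin n) F1) ≤ ((Nat.card F ^ n : ℕ) : ℕ∞) := by
      have hbound : coveringNumber (Matrix (Fin n) (Fin n) F1) ≤
          ((Nat.card F1 ^ (n * (n - n / n.minFac)) : ℕ) : ℕ∞) := by
        rcases hn.eq_or_lt with rfl | h3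
        · have h2 := coveringNumber_matrix_two_le (k := F1)
          rwa [Nat.minFac_two]
        · exact coveringNumber_matrix_le h3
      refine hbound.trans ?_
      have hFd : Nat.card F = Nat.card F1 ^ d := by rw [hF, ← hd, hF1]
      rw [hFd, ← pow_mul, mul_comm d n]
      exact_mod_cast Nat.pow_le_pow_right Nat.card_pos (Nat.mul_le_mul_left n hnd)
    have heq : coveringNumber ↥(AGL n F1 F2) = coveringNumber (Matrix (Fin n) (Fin n) ↥F1) := by
      refine le_antisymm (coveringNumber_le_of_surjective
        (topLeftHom (F1 := F1) (F2 := F2)).toNonUnitalRingHom hsurj) ?_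
      have := min_le_coveringNumber (F1 := F1) (F2 := F2) hn hcomp
      rwa [min_eq_right hle] at this
    refine ⟨fun hel => ?_, heq⟩
    -- the kernel of the projection contains the bottom-right copy of `F2`
    have hker : TwoSidedIdeal.ker (topLeftHom (n := n) (F1 := F1) (F2 := F2)) ≠ ⊥ := by
      rw [Ne, TwoSidedIdeal.ker_eq_bot]
      intro hinj
      have h1 : mk (n := n) (F1 := F1) (F2 := F2) 0 0 1 = mk 0 0 0 :=
        hinj ((topLeft_mk _ _ _).trans (topLeft_mk _ _ _).symm)
      exact one_ne_zero (mk_inj.1 h1).2.2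
    have hlt := hel _ hker
    let f : (TwoSidedIdeal.ker (topLeftHom (n := n) (F1 := F1) (F2 := F2))).ringCon.Quotient →+*
        Matrix (Fin n) (Fin n) F1 := RingCon.lift _ topLeftHom fun _ _ h => h
    have hf : Function.Surjective f := fun A => by
      obtain ⟨M, hM⟩ := hsurj A
      exact ⟨RingCon.mk' _ M, hM⟩
    have := coveringNumber_le_of_surjective f.toNonUnitalRingHom hf
    rw [heq] at hlt
    exact absurd hlt (not_lt.2 this)
  refine ⟨key, fun h2 => (key ?_).1⟩
  subst h2
  rw [Nat.minFac_two]
  omega
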